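/- arXiv:2511.02338 — 7 statements merged into one kernel-verified Lean document; each statement's English description precedes it below -/
import Mathlib

section
/- Let t ≥ 0, 0 ≤ λ ≤ 1, and let h = h(z) belong to H¹_{μ_λ}(ℝ₊), i.e. both ‖h‖_{L²_{μ_λ}} and ‖∂_z h‖_{L²_{μ_λ}} are finite. Then λ^{1/2}/(√2 (1+t)^{1/2}) · ‖h‖_{L²_{μ_λ}} ≤ ‖∂_z h‖_{L²_{μ_λ}}. -/
open MeasureTheory Set

noncomputable section

/-- The Gaussian weight `μ_λ(t,z) = exp(λz²/(4(1+t)))`. -/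
def mu (lam t z : ℝ) : ℝ := Real.exp (lam * z ^ 2 / (4 * (1 + t)))

/-- The squared weighted norm `‖h‖²_{L²_{μ_λ}} = ∫₀^∞ μ_λ(t,z) h(z)² dz`. -/
def L2muSq (lam t : ℝ) (h : ℝ → ℝ) : ENNReal :=
  ∫⁻ z in Set.Ioi (0 : ℝ), ENNReal.ofReal (mu lam t z * h z ^ 2)

open Filter Topology

lemma aux_real (a : ℝ) (ha : 0 ≤ a) (h : ℝ → ℝ) (hdiff : Differentiable ℝ h)
    (h1 : IntegrableOn (fun z => Real.exp (a * z ^ 2) * h z ^ 2) (Ioi 0))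
    (h2 : IntegrableOn (fun z => Real.exp (a * z ^ 2) * deriv h z ^ 2) (Ioi 0)) :
    2 * a * ∫ z in Ioi (0:ℝ), Real.exp (a * z ^ 2) * h z ^ 2
      ≤ ∫ z in Ioi (0:ℝ), Real.exp (a * z ^ 2) * deriv h z ^ 2 := by
  set f : ℝ → ℝ := fun z => Real.exp (a * z ^ 2) * h z ^ 2 with hf
  set k : ℝ → ℝ := fun z => Real.exp (a * z ^ 2) * deriv h z ^ 2 with hk
  have hφ : IntegrableOn (fun z => k z - 2 * a * f z) (Ioi 0) := h2.sub (h1.const_mul _)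
  have hint : ∫ z in Ioi (0:ℝ), (k z - 2 * a * f z)
      = (∫ z in Ioi (0:ℝ), k z) - 2 * a * ∫ z in Ioi (0:ℝ), f z := by
    rw [integral_sub h2 (h1.const_mul _), integral_const_mul]
  have hder : ∀ z, HasDerivAt (fun z => -(2 * a) * (z * f z))
      (-(2 * a) * (1 * f z + z * (Real.exp (a * z ^ 2) * (a * (2 * z)) * h z ^ 2
        + Real.exp (a * z ^ 2) * (2 * h z * deriv h z)))) z := by
    intro z
    have e1 : HasDerivAt (fun z : ℝ => Real.exp (a * z ^ 2))
        (Real.exp (a * z ^ 2) * (a * (2 * z))) z := by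
      have := ((hasDerivAt_pow 2 z).const_mul a).exp
      simpa using this
    have e2 : HasDerivAt (fun z : ℝ => h z ^ 2) (2 * h z * deriv h z) z := by
      have := (hdiff z).hasDerivAt.fun_pow 2
      simpa using this
    exact ((hasDerivAt_id z).mul (e1.mul e2)).const_mul _
  have key : ∀ R, 0 ≤ R → -(2 * a) * (R * f R) ≤ ∫ z in (0:ℝ)..R, (k z - 2 * a * f z) := by
    intro R hR
    have := intervalIntegral.sub_le_integral_of_hasDeriv_right_of_le hR
      (g := fun z => -(2 * a) * (z * f z)) (φ := fun z => k z - 2 * a * f z)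
      (fun z _ => (hder z).continuousAt.continuousWithinAt)
      (fun z _ => (hder z).hasDerivWithinAt)
      (by
        rw [integrableOn_Icc_iff_integrableOn_Ioc]
        exact hφ.mono_set Ioc_subset_Ioi_self)
      (fun z _ => by
        have : 0 ≤ Real.exp (a * z ^ 2) * (deriv h z + 2 * a * z * h z) ^ 2 := by positivity
        simp only [hf, hk]
        nlinarith)
    simpa using this
  have hlim := intervalIntegral_tendsto_integral_Ioi (0:ℝ) hφ tendsto_id
  by_contra hcon
  push Not at hcon
  set I := ∫ z in Ioi (0:ℝ), (k z - 2 * a * f z) with hI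
  have hIneg : I < 0 := by rw [hint]; linarith
  have hev : ∀ᶠ R in atTop, (∫ z in (0:ℝ)..R, (k z - 2 * a * f z)) < I / 2 :=
    hlim.eventually (gt_mem_nhds (by linarith))
  obtain ⟨R0, hR0⟩ := (hev.and (eventually_ge_atTop 1)).exists_forall_of_atTop
  have hR1 : 1 ≤ R0 := (hR0 R0 le_rfl).2
  refine not_integrableOn_Ioi_inv (a := R0) ?_
  have hb : IntegrableOn (fun z => (2 / (-I)) * (2 * a * f z)) (Ioi R0) :=
    ((h1.mono_set (Ioi_subset_Ioi (by linarith))).const_mul (2 * a)).const_mul _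
  refine Integrable.mono' hb measurable_inv.aestronglyMeasurable ?_
  refine (ae_restrict_iff' measurableSet_Ioi).2 (Eventually.of_forall fun z hz => ?_)
  have hz' : R0 < z := hz
  have hz0 : 0 < z := by linarith
  have A := key z hz0.le
  have B := (hR0 z hz'.le).1
  rw [Real.norm_of_nonneg (by positivity), inv_le_iff_one_le_mul₀ hz0]
  have hI' : 0 < -I := by linarith
  rw [div_mul_eq_mul_div, div_mul_eq_mul_div, le_div_iff₀ hI']
  nlinarith

/-- Weighted Poincaré-type inequality:
`λ^{1/2}/(√2 (1+t)^{1/2}) ‖h‖_{L²_{μ_λ}} ≤ ‖∂_z h‖_{L²_{μ_λ}}` for `h ∈ H¹_{μ_λ}(ℝ₊)`. -/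
theorem statement8 (t lam : ℝ) (ht : 0 ≤ t) (hlam0 : 0 ≤ lam) (hlam1 : lam ≤ 1)
    (h : ℝ → ℝ) (hdiff : Differentiable ℝ h)
    (hmem : L2muSq lam t h < ⊤) (hmem' : L2muSq lam t (deriv h) < ⊤) :
    ENNReal.ofReal (Real.sqrt lam / (Real.sqrt 2 * Real.sqrt (1 + t))) *
        L2muSq lam t h ^ (1 / 2 : ℝ)
      ≤ L2muSq lam t (deriv h) ^ (1 / 2 : ℝ) := by
  set a := lam / (4 * (1 + t)) with ha
  have ha0 : 0 ≤ a := by positivity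
  have hmu : ∀ z, mu lam t z = Real.exp (a * z ^ 2) := by
    intro z; rw [mu, ha]; congr 1; ring
  have gen : ∀ g : ℝ → ℝ, Measurable g → L2muSq lam t g < ⊤ →
      IntegrableOn (fun z => Real.exp (a * z ^ 2) * g z ^ 2) (Ioi 0) ∧
      L2muSq lam t g = ENNReal.ofReal (∫ z in Ioi (0:ℝ), Real.exp (a * z ^ 2) * g z ^ 2) := by
    intro g hg hfin
    simp only [L2muSq, hmu] at hfin ⊢
    have hm : Measurable (fun z => Real.exp (a * z ^ 2) * g z ^ 2) := by fun_prop
    have hnn : ∀ z, 0 ≤ Real.exp (a * z ^ 2) * g z ^ 2 := fun z => by positivity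
    have hi : IntegrableOn (fun z => Real.exp (a * z ^ 2) * g z ^ 2) (Ioi 0) :=
      (lintegral_ofReal_ne_top_iff_integrable hm.aestronglyMeasurable
        (Eventually.of_forall hnn)).1 hfin.ne
    exact ⟨hi, (ofReal_integral_eq_lintegral_ofReal hi (Eventually.of_forall hnn)).symm⟩
  obtain ⟨i1, e1⟩ := gen h hdiff.continuous.measurable hmem
  obtain ⟨i2, e2⟩ := gen (deriv h) (measurable_deriv h) hmem'
  have main := aux_real a ha0 h hdiff i1 i2
  rw [e1, e2]
  have hc : Real.sqrt lam / (Real.sqrt 2 * Real.sqrt (1 + t)) = (2 * a) ^ (1 / 2 : ℝ) := by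
    rw [← Real.sqrt_mul (by norm_num), ← Real.sqrt_div hlam0, ← Real.sqrt_eq_rpow, ha]
    congr 1
    field_simp
    norm_num
  rw [hc, ← ENNReal.ofReal_rpow_of_nonneg (by positivity) (by norm_num),
    ← ENNReal.mul_rpow_of_nonneg _ _ (by norm_num), ← ENNReal.ofReal_mul (by positivity)]
  exact ENNReal.rpow_le_rpow (ENNReal.ofReal_le_ofReal main) (by norm_num)
end
end

section
/- Let t ≥ 0, 0 ≤ λ ≤ 1, and let h = h(z) belong to H¹_{μ_λ}(ℝ₊). Then λ^{1/2}/(2(1+t)^{1/2}) · ‖h‖_{L²_{μ_λ}} + (λ/4) · ‖(z/(1+t)) h‖_{L²_{μ_λ}} ≤ 2 ‖∂_z h‖_{L²_{μ_λ}}. -/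
open MeasureTheory Set

noncomputable section

theorem mu_pos' (lam t z : ℝ) : 0 < mu lam t z := Real.exp_pos _

theorem mu_deriv (lam t z : ℝ) (ht : 0 ≤ t) :
    HasDerivAt (mu lam t) (2 * (lam / (4 * (1 + t))) * z * mu lam t z) z := by
  have h1 : HasDerivAt (fun z : ℝ => lam * z ^ 2 / (4 * (1 + t)))
      (lam * (2 * z) / (4 * (1 + t))) z := by
    have := ((hasDerivAt_pow 2 z).const_mul lam).div_const (4 * (1 + t))
    simpa using this
  have h2 := h1.exp
  refine h2.congr_deriv ?_
  unfold mu
  ring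

theorem mu_cont (lam t : ℝ) : Continuous (mu lam t) := by
  unfold mu
  fun_prop

theorem integrable_of_L2 (lam t : ℝ) (h : ℝ → ℝ) (hm : Measurable h)
    (hmem : L2muSq lam t h < ⊤) :
    IntegrableOn (fun z => mu lam t z * h z ^ 2) (Ioi 0) ∧
    L2muSq lam t h = ENNReal.ofReal (∫ z in Ioi (0:ℝ), mu lam t z * h z ^ 2) := by
  have hnn : ∀ z, 0 ≤ mu lam t z * h z ^ 2 := fun z =>
    mul_nonneg (mu_pos' _ _ _).le (sq_nonneg _)
  have hI : IntegrableOn (fun z => mu lam t z * h z ^ 2) (Ioi 0) := by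
    refine ⟨((mu_cont lam t).measurable.mul (hm.pow_const 2)).aestronglyMeasurable, ?_⟩
    rw [hasFiniteIntegral_iff_ofReal (Filter.Eventually.of_forall hnn)]
    exact hmem
  refine ⟨hI, ?_⟩
  rw [ofReal_integral_eq_lintegral_ofReal hI (Filter.Eventually.of_forall hnn)]
  rfl

theorem main_bound (t lam : ℝ) (ht : 0 ≤ t) (hlam : 0 < lam)
    (h : ℝ → ℝ) (hdiff : Differentiable ℝ h)
    (hX : IntegrableOn (fun z => mu lam t z * h z ^ 2) (Ioi 0))
    (hD : IntegrableOn (fun z => mu lam t z * deriv h z ^ 2) (Ioi 0)) :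
    IntegrableOn (fun z => lam / (4 * (1 + t)) * (mu lam t z * h z ^ 2)
      + (lam / (4 * (1 + t))) ^ 2 * (mu lam t z * (z * h z) ^ 2)) (Ioi 0) ∧
    (∫ z in Ioi (0:ℝ), (lam / (4 * (1 + t)) * (mu lam t z * h z ^ 2)
      + (lam / (4 * (1 + t))) ^ 2 * (mu lam t z * (z * h z) ^ 2)))
      ≤ ∫ z in Ioi (0:ℝ), mu lam t z * deriv h z ^ 2 := by
  have hk : 0 < lam / (4 * (1 + t)) := by positivity
  have hmud := fun z => mu_deriv lam t z ht
  set k := lam / (4 * (1 + t)) with hkdef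
  have hmc := mu_cont lam t
  have hmp := mu_pos' lam t
  set w := mu lam t
  have hhc : Continuous h := hdiff.continuous
  set G : ℝ → ℝ := fun z => k * (w z * h z ^ 2) + k ^ 2 * (w z * (z * h z) ^ 2) with hG
  have hGc : Continuous G := by fun_prop
  have hG0 : ∀ z, 0 ≤ G z := fun z => by have := hmp z; simp only [hG]; positivity
  set D := ∫ z in Ioi (0:ℝ), w z * deriv h z ^ 2
  have hFd : ∀ z, HasDerivAt (fun z => k * (z * (w z * h z ^ 2)))
      (k * (w z * h z ^ 2) + 2 * k ^ 2 * (w z * (z * h z) ^ 2)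
        + 2 * k * z * w z * h z * deriv h z) z := by
    intro z
    have h1 := (((hasDerivAt_id z).mul ((hmud z).mul ((hdiff z).hasDerivAt.pow 2))).const_mul k)
    refine h1.congr_deriv ?_
    simp
    ring
  have step : ∀ R, 0 ≤ R → ∫ z in (0:ℝ)..R, G z ≤ k * (R * (w R * h R ^ 2)) + D := by
    intro R hR
    have hDR : IntegrableOn (fun z => w z * deriv h z ^ 2) (Ioc 0 R) :=
      hD.mono_set Ioc_subset_Ioi_self
    have hDR' : IntegrableOn (fun z => w z * deriv h z ^ 2) (Icc 0 R) :=
      (integrableOn_Icc_iff_integrableOn_Ioc enorm_ne_top).2 hDR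
    have hint : IntegrableOn (fun z => G z - w z * deriv h z ^ 2) (Icc 0 R) :=
      (hGc.integrableOn_Icc).sub hDR'
    have key := intervalIntegral.integral_le_sub_of_hasDeriv_right_of_le hR
      (g := fun z => k * (z * (w z * h z ^ 2))) (by fun_prop)
      (fun z _ => (hFd z).hasDerivWithinAt) hint (by
        intro z _
        have := hmp z
        have h2 : 0 ≤ w z * (k * z * h z + deriv h z) ^ 2 := by positivity
        simp only [hG]
        nlinarith)
    rw [intervalIntegral.integral_sub (hGc.intervalIntegrable _ _)
      ((intervalIntegrable_iff_integrableOn_Ioc_of_le hR).2 hDR)] at key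
    have h3 : ∫ z in (0:ℝ)..R, w z * deriv h z ^ 2 ≤ D := by
      rw [intervalIntegral.integral_of_le hR]
      refine setIntegral_mono_set hD (Filter.Eventually.of_forall fun z => ?_)
        (Filter.Eventually.of_forall Ioc_subset_Ioi_self)
      have := hmp z
      simp only [Pi.zero_apply]
      positivity
    simp only [zero_mul, mul_zero, sub_zero] at key
    linarith
  have freq : ∀ ε > 0, ∀ R0 > 0, ∃ R ≥ R0, k * (R * (w R * h R ^ 2)) ≤ ε := by
    intro ε hε R0 hR0
    by_contra! hcon
    apply not_integrableOn_Ioi_inv (a := R0)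
    have hX' : IntegrableOn (fun z => k / ε * (w z * h z ^ 2)) (Ioi R0) :=
      (hX.mono_set (Ioi_subset_Ioi hR0.le)).const_mul _
    refine hX'.mono' measurable_inv.aestronglyMeasurable ?_
    refine (ae_restrict_iff' measurableSet_Ioi).2 (Filter.Eventually.of_forall fun z hz => ?_)
    have hz' : R0 < z := hz
    have hz0 : 0 < z := hR0.trans hz'
    have := hcon z hz'.le
    rw [Real.norm_of_nonneg (by positivity), inv_le_iff_one_le_mul₀ hz0,
      show k / ε * (w z * h z ^ 2) * z = (k * (z * (w z * h z ^ 2))) / ε by ring,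
      le_div_iff₀ hε]
    linarith
  have bd : ∀ R, 0 < R → ∫ z in (0:ℝ)..R, G z ≤ D := by
    intro R hR
    refine le_of_forall_pos_le_add fun ε hε => ?_
    obtain ⟨S, hS, hS'⟩ := freq ε hε R hR
    have h1 := step S (hR.le.trans hS)
    have h2 : ∫ z in (0:ℝ)..R, G z ≤ ∫ z in (0:ℝ)..S, G z :=
      intervalIntegral.integral_mono_interval le_rfl hR.le hS
        (Filter.Eventually.of_forall hG0) (hGc.intervalIntegrable _ _)
    linarith
  have hGI : IntegrableOn G (Ioi 0) := by
    refine integrableOn_Ioi_of_intervalIntegral_norm_bounded (l := Filter.atTop) (b := id) D 0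
      (fun R => (hGc.integrableOn_Icc).mono_set Ioc_subset_Icc_self) Filter.tendsto_id ?_
    filter_upwards [Filter.eventually_gt_atTop 0] with R hR
    simpa only [Real.norm_of_nonneg (hG0 _), id] using bd R hR
  refine ⟨hGI, ?_⟩
  refine le_of_tendsto (intervalIntegral_tendsto_integral_Ioi 0 hGI Filter.tendsto_id) ?_
  filter_upwards [Filter.eventually_gt_atTop 0] with R hR
  exact bd R hR

theorem statement9 (t lam : ℝ) (ht : 0 ≤ t) (hlam0 : 0 ≤ lam) (hlam1 : lam ≤ 1)
    (h : ℝ → ℝ) (hdiff : Differentiable ℝ h)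
    (hmem : L2muSq lam t h < ⊤) (hmem' : L2muSq lam t (deriv h) < ⊤) :
    ENNReal.ofReal (Real.sqrt lam / (2 * Real.sqrt (1 + t))) *
          L2muSq lam t h ^ (1 / 2 : ℝ)
        + ENNReal.ofReal (lam / 4) *
            L2muSq lam t (fun z => z / (1 + t) * h z) ^ (1 / 2 : ℝ)
      ≤ 2 * L2muSq lam t (deriv h) ^ (1 / 2 : ℝ) := by
  rcases hlam0.eq_or_lt with h0 | hlam
  · subst h0
    simp
  have hhc := hdiff.continuous
  obtain ⟨hX, hXe⟩ := integrable_of_L2 lam t h hhc.measurable hmem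
  obtain ⟨hD, hDe⟩ := integrable_of_L2 lam t (deriv h) (measurable_deriv h) hmem'
  obtain ⟨hGI, hle⟩ := main_bound t lam ht hlam h hdiff hX hD
  have hmp := mu_pos' lam t
  have hk : 0 < lam / (4 * (1 + t)) := by positivity
  have h1t : 0 < 1 + t := by positivity
  have hY : IntegrableOn (fun z => mu lam t z * (z / (1 + t) * h z) ^ 2) (Ioi 0) := by
    have h1 := (hGI.sub (hX.const_mul (lam / (4 * (1 + t))))).const_mul (16 / lam ^ 2)
    refine h1.congr (Filter.Eventually.of_forall fun z => ?_)
    simp only [Pi.sub_apply]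
    field_simp
    ring
  have hYe : L2muSq lam t (fun z => z / (1 + t) * h z) =
      ENNReal.ofReal (∫ z in Ioi (0:ℝ), mu lam t z * (z / (1 + t) * h z) ^ 2) := by
    rw [ofReal_integral_eq_lintegral_ofReal hY (Filter.Eventually.of_forall fun z =>
      mul_nonneg (hmp z).le (sq_nonneg _))]
    rfl
  have hsum : (∫ z in Ioi (0:ℝ), (lam / (4 * (1 + t)) * (mu lam t z * h z ^ 2)
      + (lam / (4 * (1 + t))) ^ 2 * (mu lam t z * (z * h z) ^ 2))) =
      lam / (4 * (1 + t)) * (∫ z in Ioi (0:ℝ), mu lam t z * h z ^ 2) +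
      (lam / 4) ^ 2 * ∫ z in Ioi (0:ℝ), mu lam t z * (z / (1 + t) * h z) ^ 2 := by
    rw [← integral_const_mul, ← integral_const_mul,
      ← integral_add (hX.const_mul _) (hY.const_mul _)]
    congr 1
    funext z
    field_simp
  rw [hsum] at hle
  rw [hXe, hDe, hYe]
  have nX : 0 ≤ ∫ z in Ioi (0:ℝ), mu lam t z * h z ^ 2 :=
    integral_nonneg fun z => mul_nonneg (hmp z).le (sq_nonneg _)
  have nY : 0 ≤ ∫ z in Ioi (0:ℝ), mu lam t z * (z / (1 + t) * h z) ^ 2 :=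
    integral_nonneg fun z => mul_nonneg (hmp z).le (sq_nonneg _)
  have nD : 0 ≤ ∫ z in Ioi (0:ℝ), mu lam t z * deriv h z ^ 2 :=
    integral_nonneg fun z => mul_nonneg (hmp z).le (sq_nonneg _)
  generalize (∫ z in Ioi (0:ℝ), mu lam t z * h z ^ 2) = X at *
  generalize (∫ z in Ioi (0:ℝ), mu lam t z * (z / (1 + t) * h z) ^ 2) = Y at *
  generalize (∫ z in Ioi (0:ℝ), mu lam t z * deriv h z ^ 2) = E at *
  rw [ENNReal.ofReal_rpow_of_nonneg nX (by norm_num), ENNReal.ofReal_rpow_of_nonneg nY (by norm_num),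
    ENNReal.ofReal_rpow_of_nonneg nD (by norm_num), ← Real.sqrt_eq_rpow, ← Real.sqrt_eq_rpow,
    ← Real.sqrt_eq_rpow, ← ENNReal.ofReal_mul (by positivity), ← ENNReal.ofReal_mul (by positivity),
    ← ENNReal.ofReal_add (by positivity) (by positivity),
    show (2 : ENNReal) = ENNReal.ofReal 2 by simp, ← ENNReal.ofReal_mul (by norm_num)]
  apply ENNReal.ofReal_le_ofReal
  have e1 : (Real.sqrt lam / (2 * Real.sqrt (1 + t)) * Real.sqrt X) ^ 2
      = lam / (4 * (1 + t)) * X := by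
    rw [mul_pow, div_pow, mul_pow, Real.sq_sqrt hlam0, Real.sq_sqrt h1t.le, Real.sq_sqrt nX]
    norm_num
  have e2 : (lam / 4 * Real.sqrt Y) ^ 2 = (lam / 4) ^ 2 * Y := by
    rw [mul_pow, Real.sq_sqrt nY]
  have e3 := Real.sq_sqrt nD
  generalize Real.sqrt lam / (2 * Real.sqrt (1 + t)) * Real.sqrt X = a at *
  generalize lam / 4 * Real.sqrt Y = b at *
  refine abs_le_of_sq_le_sq' ?_ (by positivity) |>.2
  nlinarith [sq_nonneg (a - b)]
end
end

section
/- Let t ≥ 0 and 0 < λ ≤ 1, and let h = h(z) belong to H¹_{μ_λ}(ℝ₊) (so that in particular h(z) → 0 as z → ∞). Then for k = 0, 1, 2 one has ‖z^k h‖_{L∞(ℝ₊)} ≤ C_λ (1+t)^{(1+2k)/4} ‖∂_z h‖_{L²_{μ_λ}}, where C_λ is a constant depending only on λ. -/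
open MeasureTheory Set

noncomputable section

def CK (lam : ℝ) (k : ℕ) : ℝ :=
  ((lam / 4) ^ (-((2 * (k:ℝ)) + 1) / 2) * (1 / 2) * Real.Gamma (((2 * (k:ℝ)) + 1) / 2)) ^ (1 / 2 : ℝ)

lemma CK_pos (lam : ℝ) (h : 0 < lam) (k : ℕ) : 0 < CK lam k := by
  unfold CK
  have : 0 < Real.Gamma (((2 * (k:ℝ)) + 1) / 2) := Real.Gamma_pos_of_pos (by positivity)
  positivity

lemma gauss_lint (lam t : ℝ) (hl : 0 < lam) (ht : 0 ≤ t) (k : ℕ) :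
    (∫⁻ s in Ioi (0:ℝ), ENNReal.ofReal (s ^ (2 * k) * Real.exp (-(lam / 4 / (1 + t)) * s ^ 2)))
      ^ (1 / 2 : ℝ) = ENNReal.ofReal (CK lam k * (1 + t) ^ ((1 + 2 * (k : ℝ)) / 4)) := by
  have h1t : 0 < 1 + t := by linarith
  have ha : 0 < lam / 4 / (1 + t) := by positivity
  have hk : (-1:ℝ) < 2 * (k:ℝ) := by have : (0:ℝ) ≤ k := Nat.cast_nonneg k
                                     linarith
  have e : ∀ s : ℝ, s ^ (2 * k) * Real.exp (-(lam / 4 / (1 + t)) * s ^ 2)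
      = s ^ (2 * (k:ℝ)) * Real.exp (-(lam / 4 / (1 + t)) * s ^ (2:ℝ)) := by
    intro s
    rw [Real.rpow_two]
    congr 1
    rw [← Real.rpow_natCast]; push_cast; rfl
  simp_rw [e]
  rw [← ofReal_integral_eq_lintegral_ofReal (integrableOn_rpow_mul_exp_neg_mul_rpow hk two_pos ha)]
  · rw [integral_rpow_mul_exp_neg_mul_rpow two_pos hk ha]
    have hG : 0 < Real.Gamma (((2 * (k:ℝ)) + 1) / 2) := Real.Gamma_pos_of_pos (by positivity)
    rw [ENNReal.ofReal_rpow_of_nonneg (by positivity) (by norm_num)]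
    congr 1
    unfold CK
    rw [Real.div_rpow (by positivity) h1t.le]
    have : (1 + t) ^ ((1 + 2 * (k : ℝ)) / 4) = ((1 + t) ^ ((2 * (k:ℝ) + 1) / 2)) ^ (1 / 2 : ℝ) := by
      rw [← Real.rpow_mul h1t.le]; congr 1; ring
    rw [this, ← Real.mul_rpow (by positivity) (by positivity)]
    congr 1
    rw [neg_div, Real.rpow_neg h1t.le, div_inv_eq_mul]
    ring
  · filter_upwards [ae_restrict_mem measurableSet_Ioi] with s hs
    have : 0 < s := hs
    show (0:ℝ) ≤ _
    positivity

lemma holder_mu (lam t : ℝ) (hl : 0 < lam) (ht : 0 ≤ t) (k : ℕ) (f : ℝ → ℝ) (hf : Measurable f) :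
    ∫⁻ s in Ioi (0:ℝ), ENNReal.ofReal (s ^ k * |f s|) ≤
      ENNReal.ofReal (CK lam k * (1 + t) ^ ((1 + 2 * (k : ℝ)) / 4)) * L2muSq lam t f ^ (1 / 2 : ℝ) := by
  have h1t : 0 < 1 + t := by linarith
  rw [← gauss_lint lam t hl ht k]
  have H := ENNReal.lintegral_mul_le_Lp_mul_Lq (volume.restrict (Ioi (0:ℝ)))
    Real.HolderConjugate.two_two
    (f := fun s => ENNReal.ofReal (s ^ k * Real.exp (-(lam / 4 / (1 + t)) * s ^ 2 / 2)))
    (g := fun s => ENNReal.ofReal (Real.exp ((lam / 4 / (1 + t)) * s ^ 2 / 2) * |f s|))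
    (by fun_prop) (by
      have := hf.abs
      fun_prop)
  refine le_trans (le_of_eq ?_) (H.trans (le_of_eq ?_))
  · refine setLIntegral_congr_fun measurableSet_Ioi fun s hs => ?_
    have : 0 < s := hs
    simp only [Pi.mul_apply]
    rw [← ENNReal.ofReal_mul (by positivity)]
    congr 1
    have : Real.exp (-(lam / 4 / (1 + t)) * s ^ 2 / 2) * Real.exp ((lam / 4 / (1 + t)) * s ^ 2 / 2) = 1 := by
      rw [← Real.exp_add, ← Real.exp_zero]; congr 1; ring
    linear_combination (-(s ^ k * |f s|)) * this
  · unfold L2muSq mu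
    congr 2
    · refine setLIntegral_congr_fun measurableSet_Ioi fun s hs => ?_
      have : 0 < s := hs
      rw [ENNReal.ofReal_rpow_of_nonneg (by positivity) (by norm_num), Real.rpow_two, mul_pow,
        ← pow_mul, mul_comm k 2, ← Real.exp_nat_mul]
      congr 3; push_cast; ring
    · refine setLIntegral_congr_fun measurableSet_Ioi fun s hs => ?_
      rw [ENNReal.ofReal_rpow_of_nonneg (by positivity) (by norm_num), Real.rpow_two, mul_pow,
        ← Real.exp_nat_mul, sq_abs]
      congr 3; push_cast; field_simp

lemma int_mu (lam t : ℝ) (hl : 0 < lam) (ht : 0 ≤ t) (f : ℝ → ℝ) (hf : Measurable f)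
    (h : L2muSq lam t f < ⊤) : IntegrableOn f (Ioi 0) := by
  refine ⟨hf.aestronglyMeasurable, ?_⟩
  rw [hasFiniteIntegral_iff_norm]
  have := holder_mu lam t hl ht 0 f hf
  simp only [pow_zero, one_mul] at this
  exact this.trans_lt (ENNReal.mul_lt_top ENNReal.ofReal_lt_top
    (ENNReal.rpow_lt_top_of_nonneg (by norm_num) h.ne))

/-- Weighted Sobolev embedding: for `0 < λ ≤ 1` there is `C_λ > 0`, depending only on
`λ`, such that for every `t ≥ 0` and every `h ∈ H¹_{μ_λ}(ℝ₊)` one has, for `k = 0, 1, 2`,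
`‖z^k h‖_{L∞(ℝ₊)} ≤ C_λ (1+t)^{(1+2k)/4} ‖∂_z h‖_{L²_{μ_λ}}`. -/
theorem statement10 (lam : ℝ) (hlam0 : 0 < lam) (hlam1 : lam ≤ 1) :
    ∃ C : ℝ, 0 < C ∧
      ∀ t ≥ (0 : ℝ), ∀ h : ℝ → ℝ, Differentiable ℝ h →
        L2muSq lam t h < ⊤ → L2muSq lam t (deriv h) < ⊤ →
        ∀ k : ℕ, k ≤ 2 →
          (⨆ z ∈ Set.Ioi (0 : ℝ), ENNReal.ofReal |z ^ k * h z|)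
            ≤ ENNReal.ofReal (C * (1 + t) ^ ((1 + 2 * (k : ℝ)) / 4)) *
                L2muSq lam t (deriv h) ^ (1 / 2 : ℝ) := by
  refine ⟨CK lam 0 + CK lam 1 + CK lam 2, ?_, ?_⟩
  · have := CK_pos lam hlam0
    have := this 0; have := CK_pos lam hlam0 1; have := CK_pos lam hlam0 2
    positivity
  intro t ht h hd hh hh' k hk
  have hCK : CK lam k ≤ CK lam 0 + CK lam 1 + CK lam 2 := by
    have := CK_pos lam hlam0 0; have := CK_pos lam hlam0 1; have := CK_pos lam hlam0 2
    interval_cases k <;> linarith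
  have h1t : 0 < 1 + t := by linarith
  have hm' : Measurable (deriv h) := measurable_deriv h
  have i1 := int_mu lam t hlam0 ht h hd.continuous.measurable hh
  have i2 := int_mu lam t hlam0 ht (deriv h) hm' hh'
  have lim := tendsto_zero_of_hasDerivAt_of_integrableOn_Ioi
    (fun x _ => (hd x).hasDerivAt) i2 i1
  refine iSup₂_le fun z hz => ?_
  have hz : 0 < z := hz
  have hsub : Ioi z ⊆ Ioi 0 := Ioi_subset_Ioi hz.le
  have ftc := integral_Ioi_of_hasDerivAt_of_tendsto' (a := z)
    (fun x _ => (hd x).hasDerivAt) (i2.mono_set hsub) lim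
  have b1 : ENNReal.ofReal |h z| ≤ ∫⁻ s in Ioi z, ENNReal.ofReal |deriv h s| := by
    have : |h z| = ‖∫ s in Ioi z, deriv h s‖ := by rw [ftc]; simp
    rw [this, ofReal_norm]
    refine (enorm_integral_le_lintegral_enorm _).trans (le_of_eq ?_)
    simp_rw [← ofReal_norm, Real.norm_eq_abs]
  calc ENNReal.ofReal |z ^ k * h z| = ENNReal.ofReal (z ^ k) * ENNReal.ofReal |h z| := by
        rw [abs_mul, abs_of_pos (by positivity), ENNReal.ofReal_mul (by positivity)]
    _ ≤ ENNReal.ofReal (z ^ k) * ∫⁻ s in Ioi z, ENNReal.ofReal |deriv h s| := by gcongr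
    _ = ∫⁻ s in Ioi z, ENNReal.ofReal (z ^ k) * ENNReal.ofReal |deriv h s| := by
        rw [lintegral_const_mul' _ _ ENNReal.ofReal_ne_top]
    _ ≤ ∫⁻ s in Ioi z, ENNReal.ofReal (s ^ k * |deriv h s|) := by
        refine setLIntegral_mono' measurableSet_Ioi fun s hs => ?_
        have hs : z < s := hs
        rw [← ENNReal.ofReal_mul (by positivity)]
        gcongr
    _ ≤ ∫⁻ s in Ioi 0, ENNReal.ofReal (s ^ k * |deriv h s|) := lintegral_mono_set hsub
    _ ≤ _ := holder_mu lam t hlam0 ht k _ hm'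
    _ ≤ _ := by gcongr
end
end

section
/- Fix t ≥ 0 and let h = h(z) belong to H³_μ(ℝ₊) with h(0) = 0. Define 𝓗(z) = ∂_z h(z) + (z/(2(1+t))) h(z). Then for any 0 ≤ λ < λ̃ ≤ 1 and for k = 0, 1, 2 one has ‖∂_z^{k+1} h‖_{L²_{μ_λ}} ≤ C_{λ,λ̃} ‖∂_z^k 𝓗‖_{L²_{μ_{λ̃}}}, where C_{λ,λ̃} is a constant depending only on λ and λ̃. -/
open MeasureTheory Set

noncomputable section

/-- weighted norm after rescaling -/
def WW (l : ℝ) (f : ℝ → ℝ) : ENNReal :=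
  ∫⁻ x in Set.Ioi (0 : ℝ), ENNReal.ofReal (Real.exp (l * x ^ 2 / 2) * f x ^ 2)

/-- pointwise bound -/
def PW (l : ℝ) (f : ℝ → ℝ) (B : ℝ) : Prop :=
  ∀ z : ℝ, 0 ≤ z → f z ^ 2 ≤ B * Real.exp (-(l * z ^ 2 / 2))

lemma sq_le_exp (d : ℝ) (hd : 0 < d) (x : ℝ) : x ^ 2 ≤ 2 / d * Real.exp (d * x ^ 2 / 2) := by
  have h := Real.add_one_le_exp (d * x ^ 2 / 2)
  have : x ^ 2 = 2 / d * (d * x ^ 2 / 2) := by field_simp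
  rw [this]
  have h2 : 0 < 2 / d := by positivity
  have : 2 / d * (d * x ^ 2 / 2) = x ^ 2 := by field_simp
  rw [this]
  calc x ^ 2 = 2 / d * (d * x ^ 2 / 2) := by field_simp
    _ ≤ _ := by gcongr; linarith

lemma cs_int (w g : ℝ → ℝ) (hw : Continuous w) (hg : Continuous g) (hpos : ∀ x, 0 < w x)
    (a b : ℝ) (hab : a ≤ b) :
    (∫ x in a..b, g x) ^ 2 ≤ (∫ x in a..b, (w x)⁻¹) * ∫ x in a..b, w x * g x ^ 2 := by
  rcases eq_or_lt_of_le hab with rfl | hlt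
  · simp
  have hwi : Continuous fun x => (w x)⁻¹ := hw.inv₀ fun x => (hpos x).ne'
  have hD : 0 < ∫ x in a..b, (w x)⁻¹ :=
    intervalIntegral.intervalIntegral_pos_of_pos (hwi.intervalIntegrable _ _)
      (fun x => inv_pos.2 (hpos x)) hlt
  set D := ∫ x in a..b, (w x)⁻¹ with hDdef
  set G := ∫ x in a..b, g x with hG
  set c := G / D with hc
  have h0 : 0 ≤ ∫ x in a..b, (w x * g x ^ 2 - 2 * c * g x + c ^ 2 * (w x)⁻¹) := by
    apply intervalIntegral.integral_nonneg hab
    intro x _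
    have := hpos x
    have e : w x * g x ^ 2 - 2 * c * g x + c ^ 2 * (w x)⁻¹ = w x * (g x - c * (w x)⁻¹) ^ 2 := by
      field_simp
      ring
    rw [e]; positivity
  rw [intervalIntegral.integral_add, intervalIntegral.integral_sub,
    intervalIntegral.integral_const_mul, intervalIntegral.integral_const_mul] at h0
  · rw [← hDdef, ← hG] at h0
    have e : c * D = G := by rw [hc]; field_simp
    have e2 := mul_nonneg hD.le h0
    nlinarith
  all_goals exact Continuous.intervalIntegrable (by fun_prop) _ _

lemma int_le_of_WW (l : ℝ) (f : ℝ → ℝ) (hf : Continuous f) (B : ℝ) (hB : 0 ≤ B)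
    (h : WW l f ≤ ENNReal.ofReal B) (a b : ℝ) (ha : 0 ≤ a) (hab : a ≤ b) :
    ∫ x in a..b, Real.exp (l * x ^ 2 / 2) * f x ^ 2 ≤ B := by
  have hc : Continuous fun x => Real.exp (l * x ^ 2 / 2) * f x ^ 2 := by fun_prop
  rw [intervalIntegral.integral_of_le hab]
  rw [← ENNReal.ofReal_le_ofReal_iff hB]
  rw [ofReal_integral_eq_lintegral_ofReal]
  · refine le_trans (lintegral_mono_set ?_) h
    intro x hx
    exact lt_of_le_of_lt ha hx.1
  · exact (hc.integrableOn_Icc).mono_set Ioc_subset_Icc_self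
  · exact Filter.Eventually.of_forall fun x => by positivity

lemma L1 (l l' : ℝ) (h : l < l') : ∃ C : ℝ, 0 ≤ C ∧ ∀ (f : ℝ → ℝ) (B : ℝ), 0 ≤ B → PW l' f B →
    WW l f ≤ ENNReal.ofReal (C * B) := by
  have hi : Integrable fun x : ℝ => Real.exp (-((l' - l) / 2) * x ^ 2) :=
    integrable_exp_neg_mul_sq (by linarith)
  refine ⟨∫ x in Ioi (0:ℝ), Real.exp (-((l' - l) / 2) * x ^ 2),
    integral_nonneg fun x => by positivity, ?_⟩
  intro f B hB hP
  rw [← integral_mul_const, ofReal_integral_eq_lintegral_ofReal]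
  · apply setLIntegral_mono' measurableSet_Ioi
    intro x hx
    apply ENNReal.ofReal_le_ofReal
    calc _ ≤ Real.exp (l * x ^ 2 / 2) * (B * Real.exp (-(l' * x ^ 2 / 2))) := by
          gcongr; exact hP x (le_of_lt hx)
      _ = (Real.exp (l * x ^ 2 / 2) * Real.exp (-(l' * x ^ 2 / 2))) * B := by ring
      _ = _ := by rw [← Real.exp_add]; congr 2; ring
  · exact (hi.integrableOn).mul_const B
  · exact Filter.Eventually.of_forall fun x => by positivity

lemma L2 (l l' : ℝ) (h : l < l') : ∃ C : ℝ, 0 ≤ C ∧ ∀ (f : ℝ → ℝ) (B : ℝ), 0 ≤ B → PW l' f B →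
    PW l (fun x => x * f x) (C * B) := by
  refine ⟨2 / (l' - l), by have := sub_pos.2 h; positivity, ?_⟩
  intro f B hB hP z hz
  have h1 := sq_le_exp (l' - l) (sub_pos.2 h) z
  have h2 := hP z hz
  calc (z * f z) ^ 2 = z ^ 2 * f z ^ 2 := by ring
    _ ≤ (2 / (l' - l) * Real.exp ((l' - l) * z ^ 2 / 2)) * (B * Real.exp (-(l' * z ^ 2 / 2))) := by
      gcongr
    _ = 2 / (l' - l) * B * (Real.exp ((l' - l) * z ^ 2 / 2) * Real.exp (-(l' * z ^ 2 / 2))) := by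
      ring
    _ = _ := by rw [← Real.exp_add]; congr 2; ring

lemma L3 (l l' : ℝ) (h : l < l') (h1 : l' ≤ 1) : ∃ C : ℝ, 0 ≤ C ∧
    ∀ (f f' : ℝ → ℝ) (B : ℝ), 0 ≤ B → (∀ x, HasDerivAt f (f' x) x) → Continuous f' → f 0 = 0 →
    WW l' (fun x => f' x + x * f x) ≤ ENNReal.ofReal B → PW l f (C * B) := by
  have hd := sub_pos.2 h
  refine ⟨1 + 2 / (l' - l), by positivity, ?_⟩
  intro f f' B hB hf hf' hf0 hW z hz
  have hcf : Continuous f := continuous_iff_continuousAt.2 fun x => (hf x).continuousAt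
  have hder : ∀ x, HasDerivAt (fun x => Real.exp (x ^ 2 / 2) * f x)
      (Real.exp (x ^ 2 / 2) * (f' x + x * f x)) x := by
    intro x
    have e1 : HasDerivAt (fun x : ℝ => x ^ 2 / 2) x x := by
      refine ((hasDerivAt_pow 2 x).div_const 2).congr_deriv ?_
      simp
    refine (e1.exp.mul (hf x)).congr_deriv ?_
    ring
  have hint : ∫ x in (0:ℝ)..z, Real.exp (x ^ 2 / 2) * (f' x + x * f x)
      = Real.exp (z ^ 2 / 2) * f z := by
    rw [intervalIntegral.integral_eq_sub_of_hasDerivAt (fun x _ => hder x)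
      (Continuous.intervalIntegrable (by fun_prop) _ _)]
    simp [hf0]
  have hcs := cs_int (fun x => Real.exp (l' * x ^ 2 / 2 - x ^ 2))
    (fun x => Real.exp (x ^ 2 / 2) * (f' x + x * f x)) (by fun_prop) (by fun_prop)
    (fun x => by positivity) 0 z hz
  rw [hint] at hcs
  have e2 : ∫ x in (0:ℝ)..z, Real.exp (l' * x ^ 2 / 2 - x ^ 2) *
      (Real.exp (x ^ 2 / 2) * (f' x + x * f x)) ^ 2 ≤ B := by
    refine le_trans (le_of_eq ?_) (int_le_of_WW l' (fun x => f' x + x * f x) (by fun_prop) B hB hW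
      0 z le_rfl hz)
    congr 1; ext x
    rw [mul_pow, ← mul_assoc, ← Real.exp_nat_mul, ← Real.exp_add]
    congr 2; push_cast; ring
  have e3 : ∫ x in (0:ℝ)..z, (Real.exp (l' * x ^ 2 / 2 - x ^ 2))⁻¹
      ≤ z * Real.exp (z ^ 2 - l' * z ^ 2 / 2) := by
    calc _ ≤ ∫ x in (0:ℝ)..z, Real.exp (z ^ 2 - l' * z ^ 2 / 2) := by
          apply intervalIntegral.integral_mono_on hz
          · apply Continuous.intervalIntegrable
            exact Continuous.inv₀ (by fun_prop) (fun x => (Real.exp_pos _).ne')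
          · simp
          · intro x hx
            rw [← Real.exp_neg]
            apply Real.exp_le_exp.2
            have : x ^ 2 ≤ z ^ 2 := by have := hx.1; have := hx.2; gcongr
            nlinarith
      _ = _ := by simp
  have e4 : (Real.exp (z ^ 2 / 2) * f z) ^ 2 ≤ z * Real.exp (z ^ 2 - l' * z ^ 2 / 2) * B := by
    refine hcs.trans ?_
    refine mul_le_mul e3 e2 ?_ (by positivity)
    exact intervalIntegral.integral_nonneg hz fun x _ => by positivity
  have e5 : f z ^ 2 ≤ z * Real.exp (- (l' * z ^ 2 / 2)) * B := by
    have : f z ^ 2 = Real.exp (- z ^ 2) * (Real.exp (z ^ 2 / 2) * f z) ^ 2 := by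
      rw [mul_pow, ← mul_assoc, ← Real.exp_nat_mul, ← Real.exp_add]
      have : -z ^ 2 + ((2:ℕ):ℝ) * (z ^ 2 / 2) = 0 := by push_cast; ring
      rw [this]; simp
    rw [this]
    calc _ ≤ Real.exp (- z ^ 2) * (z * Real.exp (z ^ 2 - l' * z ^ 2 / 2) * B) := by gcongr
      _ = z * (Real.exp (- z ^ 2) * Real.exp (z ^ 2 - l' * z ^ 2 / 2)) * B := by ring
      _ = _ := by rw [← Real.exp_add]; congr 3; ring
  have e6 : z ≤ (1 + 2 / (l' - l)) * Real.exp ((l' - l) * z ^ 2 / 2) := by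
    have a1 := sq_le_exp (l' - l) hd z
    have a2 : 1 ≤ Real.exp ((l' - l) * z ^ 2 / 2) := Real.one_le_exp (by positivity)
    nlinarith [sq_nonneg (z - 1)]
  calc f z ^ 2 ≤ z * Real.exp (- (l' * z ^ 2 / 2)) * B := e5
    _ ≤ ((1 + 2 / (l' - l)) * Real.exp ((l' - l) * z ^ 2 / 2)) * Real.exp (- (l' * z ^ 2 / 2)) * B := by
      gcongr
    _ = (1 + 2 / (l' - l)) * B * (Real.exp ((l' - l) * z ^ 2 / 2) * Real.exp (- (l' * z ^ 2 / 2))) := by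
      ring
    _ = _ := by rw [← Real.exp_add]; congr 2; ring

lemma exists_small (f : ℝ → ℝ) (hW : WW 0 f < ⊤) (e z : ℝ) (he : 0 < e) (hz : 0 ≤ z) :
    ∃ y, z < y ∧ f y ^ 2 < e := by
  by_contra! hcon
  have : (⊤ : ENNReal) ≤ WW 0 f := by
    calc (⊤ : ENNReal) = ∫⁻ x in Ioi z, ENNReal.ofReal e := by
          simp [he, ENNReal.mul_top]
      _ ≤ ∫⁻ x in Ioi z, ENNReal.ofReal (Real.exp (0 * x ^ 2 / 2) * f x ^ 2) := by
          apply setLIntegral_mono' measurableSet_Ioi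
          intro x hx
          apply ENNReal.ofReal_le_ofReal
          simpa using hcon x hx
      _ ≤ _ := lintegral_mono_set (Ioi_subset_Ioi hz)
  exact absurd hW (not_lt.2 this)

lemma L4 (l l' : ℝ) (h0 : 0 ≤ l) (h : l < l') : ∃ C : ℝ, 0 ≤ C ∧
    ∀ (f f' : ℝ → ℝ) (B : ℝ), 0 ≤ B → (∀ x, HasDerivAt f (f' x) x) → Continuous f' →
    WW 0 f < ⊤ →
    WW l' f' ≤ ENNReal.ofReal B → PW l f (C * B) := by
  have hi : Integrable fun x : ℝ => Real.exp (-((l' - l) / 2) * x ^ 2) :=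
    integrable_exp_neg_mul_sq (by linarith)
  refine ⟨∫ x : ℝ, Real.exp (-((l' - l) / 2) * x ^ 2),
    integral_nonneg fun x => by positivity, ?_⟩
  set G := ∫ x : ℝ, Real.exp (-((l' - l) / 2) * x ^ 2) with hG
  have hGn : 0 ≤ G := integral_nonneg fun x => by positivity
  intro f f' B hB hf hf' hW0 hW z hz
  set K := G * B * Real.exp (-(l * z ^ 2 / 2)) with hK
  have hKn : 0 ≤ K := by positivity
  have key : ∀ y, z < y → (f y - f z) ^ 2 ≤ K := by
    intro y hy
    have hcs := cs_int (fun x => Real.exp (l' * x ^ 2 / 2)) f' (by fun_prop) hf'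
      (fun x => by positivity) z y hy.le
    rw [intervalIntegral.integral_eq_sub_of_hasDerivAt (fun x _ => hf x)
      (hf'.intervalIntegrable _ _)] at hcs
    have e2 := int_le_of_WW l' f' hf' B hB hW z y hz hy.le
    have e3 : ∫ x in z..y, (Real.exp (l' * x ^ 2 / 2))⁻¹ ≤ Real.exp (-(l * z ^ 2 / 2)) * G := by
      calc _ ≤ ∫ x in z..y, Real.exp (-(l * z ^ 2 / 2)) * Real.exp (-((l' - l) / 2) * x ^ 2) := by
            apply intervalIntegral.integral_mono_on hy.le
            · apply Continuous.intervalIntegrable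
              exact Continuous.inv₀ (by fun_prop) (fun x => (Real.exp_pos _).ne')
            · exact Continuous.intervalIntegrable (by fun_prop) _ _
            · intro x hx
              rw [← Real.exp_neg, ← Real.exp_add]
              apply Real.exp_le_exp.2
              have : z ^ 2 ≤ x ^ 2 := by have := hx.1; gcongr
              nlinarith
        _ ≤ _ := by
            rw [intervalIntegral.integral_const_mul]
            gcongr
            rw [intervalIntegral.integral_of_le hy.le]
            exact setIntegral_le_integral hi (Filter.Eventually.of_forall fun x => by positivity)
    refine hcs.trans ?_
    calc _ ≤ (Real.exp (-(l * z ^ 2 / 2)) * G) * B := by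
          refine mul_le_mul e3 e2 ?_ (by positivity)
          exact intervalIntegral.integral_nonneg hy.le fun x _ => by positivity
      _ = K := by rw [hK]; ring
  have : |f z| ≤ Real.sqrt K := by
    apply le_of_forall_pos_le_add
    intro e he
    obtain ⟨y, hy, hye⟩ := exists_small f hW0 (e ^ 2) z (by positivity) hz
    have h1 := Real.abs_le_sqrt (key y hy)
    have h2 : |f y| < e := abs_lt_of_sq_lt_sq hye he.le
    have h3 : |f z| ≤ |f y| + |f y - f z| := by
      have := abs_sub_abs_le_abs_sub (f z) (f y)
      rw [abs_sub_comm] at this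
      linarith
    linarith
  rw [← sq_abs]
  calc |f z| ^ 2 ≤ Real.sqrt K ^ 2 := by gcongr
    _ = K := Real.sq_sqrt hKn

lemma WW_sub (l l' : ℝ) (hl : l ≤ l') (f g : ℝ → ℝ) (hf : Continuous f) (A B : ℝ) (hA : 0 ≤ A) (hB : 0 ≤ B)
    (h1 : WW l' f ≤ ENNReal.ofReal A) (h2 : WW l g ≤ ENNReal.ofReal B) :
    WW l (fun x => f x - g x) ≤ ENNReal.ofReal (2 * A + 2 * B) := by
  rw [ENNReal.ofReal_add (by positivity) (by positivity), ENNReal.ofReal_mul (by norm_num),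
    ENNReal.ofReal_mul (by norm_num)]
  calc WW l (fun x => f x - g x)
      ≤ ∫⁻ x in Set.Ioi (0 : ℝ), (ENNReal.ofReal 2 * ENNReal.ofReal (Real.exp (l' * x ^ 2 / 2) * f x ^ 2)
        + ENNReal.ofReal 2 * ENNReal.ofReal (Real.exp (l * x ^ 2 / 2) * g x ^ 2)) := by
        apply lintegral_mono
        intro x
        simp only
        rw [← ENNReal.ofReal_mul (by norm_num), ← ENNReal.ofReal_mul (by norm_num),
          ← ENNReal.ofReal_add (by positivity) (by positivity)]
        apply ENNReal.ofReal_le_ofReal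
        have e : Real.exp (l * x ^ 2 / 2) ≤ Real.exp (l' * x ^ 2 / 2) := by gcongr
        have e' := mul_le_mul_of_nonneg_right e (sq_nonneg (f x))
        have := mul_nonneg (Real.exp_pos (l * x ^ 2 / 2)).le (sq_nonneg (f x + g x))
        nlinarith
    _ = ENNReal.ofReal 2 * WW l' f + ENNReal.ofReal 2 * WW l g := by
        rw [lintegral_add_left (by fun_prop), lintegral_const_mul' _ _ (by simp),
          lintegral_const_mul' _ _ (by simp)]
        rfl
    _ ≤ _ := by gcongr

lemma PW_sub {l : ℝ} {f g : ℝ → ℝ} {A B : ℝ} (h1 : PW l f A) (h2 : PW l g B) :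
    PW l (fun x => f x - g x) (2 * A + 2 * B) := by
  intro z hz
  have a := h1 z hz
  have b := h2 z hz
  simp only
  nlinarith [sq_nonneg (f z + g z)]

lemma PW_add {l : ℝ} {f g : ℝ → ℝ} {A B : ℝ} (h1 : PW l f A) (h2 : PW l g B) :
    PW l (fun x => f x + g x) (2 * A + 2 * B) := by
  intro z hz
  have a := h1 z hz
  have b := h2 z hz
  simp only
  nlinarith [sq_nonneg (f z - g z)]

lemma PW_mono {l l' : ℝ} {f : ℝ → ℝ} {A : ℝ} (hl : l ≤ l') (hA : 0 ≤ A) (h1 : PW l' f A) :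
    PW l f A := by
  intro z hz
  refine (h1 z hz).trans ?_
  gcongr

lemma PW_le {l : ℝ} {f : ℝ → ℝ} {A A' : ℝ} (h1 : PW l f A) (h : A ≤ A') : PW l f A' := by
  intro z hz
  refine (h1 z hz).trans ?_
  gcongr

/-- derivative system -/
structure Sys (h0 h1 h2 h3 : ℝ → ℝ) : Prop where
  d0 : ∀ x, HasDerivAt h0 (h1 x) x
  d1 : ∀ x, HasDerivAt h1 (h2 x) x
  d2 : ∀ x, HasDerivAt h2 (h3 x) x
  c3 : Continuous h3
  z0 : h0 0 = 0
  f0 : WW 0 (fun x => h1 x + x * h0 x) < ⊤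
  f1 : WW 0 (fun x => h2 x + x * h1 x + h0 x) < ⊤

section
variable {h0 h1 h2 h3 : ℝ → ℝ}
lemma Sys.c0 (S : Sys h0 h1 h2 h3) : Continuous h0 :=
  continuous_iff_continuousAt.2 fun x => (S.d0 x).continuousAt
lemma Sys.c1 (S : Sys h0 h1 h2 h3) : Continuous h1 :=
  continuous_iff_continuousAt.2 fun x => (S.d1 x).continuousAt
lemma Sys.c2 (S : Sys h0 h1 h2 h3) : Continuous h2 :=
  continuous_iff_continuousAt.2 fun x => (S.d2 x).continuousAt
lemma Sys.e0 (S : Sys h0 h1 h2 h3) (x : ℝ) :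
    HasDerivAt (fun x => h1 x + x * h0 x) (h2 x + x * h1 x + h0 x) x := by
  refine ((S.d1 x).add ((hasDerivAt_id x).mul (S.d0 x))).congr_deriv ?_
  simp; ring
lemma Sys.e1 (S : Sys h0 h1 h2 h3) (x : ℝ) :
    HasDerivAt (fun x => h2 x + x * h1 x + h0 x) (h3 x + x * h2 x + 2 * h1 x) x := by
  refine (((S.d2 x).add ((hasDerivAt_id x).mul (S.d1 x))).add (S.d0 x)).congr_deriv ?_
  simp; ring
end

lemma S0 (l l' : ℝ) (h : l < l') (hl : l' ≤ 1) : ∃ C : ℝ, 0 ≤ C ∧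
    ∀ (h0 h1 h2 h3 : ℝ → ℝ) (_ : Sys h0 h1 h2 h3) (B : ℝ), 0 ≤ B →
    WW l' (fun x => h1 x + x * h0 x) ≤ ENNReal.ofReal B →
    PW l h0 (C * B) ∧ PW l (fun x => x * h0 x) (C * B) := by
  obtain ⟨m, hm1, hm2⟩ := exists_between h
  obtain ⟨C1, hC1, H1⟩ := L3 m l' hm2 hl
  obtain ⟨C2, hC2, H2⟩ := L2 l m hm1
  refine ⟨C1 + C2 * C1, by positivity, ?_⟩
  intro h0 h1 h2 h3 S B hB hW
  have a := H1 h0 h1 B hB S.d0 S.c1 S.z0 hW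
  have b := H2 h0 _ (by positivity) a
  have p : 0 ≤ C1 * B := by positivity
  have q : 0 ≤ C2 * (C1 * B) := by positivity
  exact ⟨PW_le (PW_mono hm1.le p a) (by nlinarith), PW_le b (by nlinarith)⟩

lemma S1 (l l' : ℝ) (h0 : 0 ≤ l) (h : l < l') (hl : l' ≤ 1) : ∃ C : ℝ, 0 ≤ C ∧
    ∀ (h0 h1 h2 h3 : ℝ → ℝ) (_ : Sys h0 h1 h2 h3) (B : ℝ), 0 ≤ B →
    WW l' (fun x => h2 x + x * h1 x + h0 x) ≤ ENNReal.ofReal B →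
    PW l h0 (C * B) ∧ PW l h1 (C * B) := by
  obtain ⟨a, ha, ha'⟩ := exists_between h
  obtain ⟨b, hb, hb'⟩ := exists_between ha
  obtain ⟨c1, hc1, H1⟩ := L4 a l' (by linarith) ha'
  obtain ⟨c2, hc2, H2⟩ := L1 b a hb'
  obtain ⟨c0, hc0, H0⟩ := S0 l b hb (by linarith)
  refine ⟨2 * c1 + 2 * (c0 * (c2 * c1)), by positivity, ?_⟩
  intro h0 h1 h2 h3 S B hB hW
  have i0 := S.c0
  have i1 := S.c1
  have i2 := S.c2
  have p1 := H1 _ _ B hB S.e0 (by fun_prop) S.f0 hW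
  have p2 := H2 _ _ (by positivity) p1
  obtain ⟨p3, p4⟩ := H0 h0 h1 h2 h3 S _ (by positivity) p2
  have p5 := PW_sub (PW_mono (by linarith) (by positivity) p1) p4
  have q1 : 0 ≤ c1 * B := by positivity
  have q2 : 0 ≤ c0 * (c2 * (c1 * B)) := by positivity
  refine ⟨PW_le p3 (by nlinarith), PW_le (f := h1) (A := 2 * (c1 * B) + 2 * (c0 * (c2 * (c1 * B)))) ?_ (le_of_eq ?_)⟩
  · simpa using p5
  · ring

lemma S2 (l l' : ℝ) (h0 : 0 ≤ l) (h : l < l') (hl : l' ≤ 1) : ∃ C : ℝ, 0 ≤ C ∧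
    ∀ (h0 h1 h2 h3 : ℝ → ℝ) (_ : Sys h0 h1 h2 h3) (B : ℝ), 0 ≤ B →
    WW l' (fun x => h3 x + x * h2 x + 2 * h1 x) ≤ ENNReal.ofReal B →
    PW l h1 (C * B) ∧ PW l h2 (C * B) := by
  obtain ⟨a, ha, ha'⟩ := exists_between h
  obtain ⟨b, hb, hb'⟩ := exists_between ha
  obtain ⟨c, hc, hc'⟩ := exists_between hb
  obtain ⟨c1, hc1, H1⟩ := L4 a l' (by linarith) ha'
  obtain ⟨c2, hc2, H2⟩ := L1 b a hb'
  obtain ⟨c3, hc3, H3⟩ := S1 c b (by linarith) hc' (by linarith)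
  obtain ⟨c4, hc4, H4⟩ := L2 l c hc
  refine ⟨2 * c1 + 2 * (2 * (c4 * (c3 * (c2 * c1))) + 2 * (c3 * (c2 * c1))), by positivity, ?_⟩
  intro h0 h1 h2 h3 S B hB hW
  have i0 := S.c0
  have i1 := S.c1
  have i2 := S.c2
  have i3 := S.c3
  have p1 := H1 _ _ B hB S.e1 (by fun_prop) S.f1 hW
  have p2 := H2 _ _ (by positivity) p1
  obtain ⟨p3, p4⟩ := H3 h0 h1 h2 h3 S _ (by positivity) p2
  have p5 := H4 _ _ (by positivity) p4
  have p6 := PW_add p5 (PW_mono hc.le (by positivity) p3)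
  have p7 := PW_sub (PW_mono (by linarith) (by positivity) p1) p6
  have q1 : 0 ≤ c1 * B := by positivity
  have q2 : 0 ≤ c3 * (c2 * (c1 * B)) := by positivity
  have q3 : 0 ≤ c4 * (c3 * (c2 * (c1 * B))) := by positivity
  refine ⟨PW_le (PW_mono hc.le (by positivity) p4) (by nlinarith), PW_le (f := h2)
    (A := 2 * (c1 * B) + 2 * (2 * (c4 * (c3 * (c2 * (c1 * B)))) + 2 * (c3 * (c2 * (c1 * B)))))
    ?_ (le_of_eq ?_)⟩
  · convert p7 using 1
    ext x; ring
  · ring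

lemma T0 (l l' : ℝ) (h : l < l') (hl : l' ≤ 1) : ∃ C : ℝ, 0 ≤ C ∧
    ∀ (h0 h1 h2 h3 : ℝ → ℝ) (_ : Sys h0 h1 h2 h3) (B : ℝ), 0 ≤ B →
    WW l' (fun x => h1 x + x * h0 x) ≤ ENNReal.ofReal B →
    WW l h1 ≤ ENNReal.ofReal (C * B) := by
  obtain ⟨a, ha, ha'⟩ := exists_between h
  obtain ⟨c1, hc1, H1⟩ := S0 a l' ha' hl
  obtain ⟨c2, hc2, H2⟩ := L1 l a ha
  refine ⟨2 + 2 * (c2 * c1), by positivity, ?_⟩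
  intro h0 h1 h2 h3 S B hB hW
  have i0 := S.c0
  have i1 := S.c1
  have p1 := H2 _ _ (by positivity) (H1 h0 h1 h2 h3 S B hB hW).2
  have p2 := WW_sub l l' h.le _ _ (by fun_prop) _ _ hB (by positivity) hW p1
  convert p2 using 2
  · ext x; ring
  · ring

lemma T1 (l l' : ℝ) (h0 : 0 ≤ l) (h : l < l') (hl : l' ≤ 1) : ∃ C : ℝ, 0 ≤ C ∧
    ∀ (h0 h1 h2 h3 : ℝ → ℝ) (_ : Sys h0 h1 h2 h3) (B : ℝ), 0 ≤ B →
    WW l' (fun x => h2 x + x * h1 x + h0 x) ≤ ENNReal.ofReal B →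
    WW l h2 ≤ ENNReal.ofReal (C * B) := by
  obtain ⟨a, ha, ha'⟩ := exists_between h
  obtain ⟨b, hb, hb'⟩ := exists_between ha
  obtain ⟨c1, hc1, H1⟩ := S1 a l' (by linarith) ha' hl
  obtain ⟨c3, hc3, H3⟩ := L2 b a hb'
  obtain ⟨c2, hc2, H2⟩ := L1 l b hb
  refine ⟨2 + 2 * (c2 * (2 * (c3 * c1) + 2 * c1)), by positivity, ?_⟩
  intro h0 h1 h2 h3 S B hB hW
  have i0 := S.c0
  have i1 := S.c1
  have i2 := S.c2
  obtain ⟨p3, p4⟩ := H1 h0 h1 h2 h3 S B hB hW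
  have p5 := PW_add (H3 _ _ (by positivity) p4) (PW_mono hb'.le (by positivity) p3)
  have p1 := H2 _ _ (by positivity) p5
  have p2 := WW_sub l l' h.le _ _ (by fun_prop) _ _ hB (by positivity) hW p1
  convert p2 using 2
  · ext x; ring
  · ring

lemma T2 (l l' : ℝ) (h0 : 0 ≤ l) (h : l < l') (hl : l' ≤ 1) : ∃ C : ℝ, 0 ≤ C ∧
    ∀ (h0 h1 h2 h3 : ℝ → ℝ) (_ : Sys h0 h1 h2 h3) (B : ℝ), 0 ≤ B →
    WW l' (fun x => h3 x + x * h2 x + 2 * h1 x) ≤ ENNReal.ofReal B →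
    WW l h3 ≤ ENNReal.ofReal (C * B) := by
  obtain ⟨a, ha, ha'⟩ := exists_between h
  obtain ⟨b, hb, hb'⟩ := exists_between ha
  obtain ⟨c1, hc1, H1⟩ := S2 a l' (by linarith) ha' hl
  obtain ⟨c3, hc3, H3⟩ := L2 b a hb'
  obtain ⟨c2, hc2, H2⟩ := L1 l b hb
  refine ⟨2 + 2 * (c2 * (2 * (c3 * c1) + 2 * (2 * c1 + 2 * c1))), by positivity, ?_⟩
  intro h0 h1 h2 h3 S B hB hW
  have i0 := S.c0
  have i1 := S.c1
  have i2 := S.c2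
  have i3 := S.c3
  obtain ⟨p3, p4⟩ := H1 h0 h1 h2 h3 S B hB hW
  have p3' := PW_mono hb'.le (by positivity) p3
  have p5 := PW_add (H3 _ _ (by positivity) p4) (PW_add p3' p3')
  have p1 := H2 _ _ (by positivity) p5
  have p2 := WW_sub l l' h.le _ _ (by fun_prop) _ _ hB (by positivity) hW p1
  convert p2 using 2
  · ext x; ring
  · ring

lemma conv_bd (C : ℝ) (hC : 0 ≤ C) (X Y : ENNReal)
    (h : ∀ B : ℝ, 0 ≤ B → Y ≤ ENNReal.ofReal B → X ≤ ENNReal.ofReal (C * B)) :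
    X ≤ ENNReal.ofReal (C + 1) * Y := by
  rcases eq_or_ne Y ⊤ with rfl | hY
  · rw [ENNReal.mul_top]
    · exact le_top
    · simp; linarith
  · have := h Y.toReal (by positivity) (by rw [ENNReal.ofReal_toReal hY])
    refine this.trans ?_
    rw [ENNReal.ofReal_mul hC, ENNReal.ofReal_toReal hY]
    gcongr
    linarith

lemma scale (l t c r : ℝ) (f : ℝ → ℝ) (hr : 0 < r) (hr2 : r ^ 2 = 2 * (1 + t)) :
    WW l (fun x => c * f (r * x)) = ENNReal.ofReal (c ^ 2 / r) * L2muSq l t f := by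
  have himg : (fun x => r * x) '' Ioi (0:ℝ) = Ioi 0 := by
    ext y
    simp only [mem_image, mem_Ioi]
    constructor
    · rintro ⟨x, hx, rfl⟩; positivity
    · intro hy; exact ⟨y / r, by positivity, by field_simp⟩
  have key : L2muSq l t f = ∫⁻ x in Ioi (0:ℝ), ENNReal.ofReal |r| *
      ENNReal.ofReal (mu l t (r * x) * f (r * x) ^ 2) := by
    unfold L2muSq
    conv_lhs => rw [← himg]
    rw [lintegral_image_eq_lintegral_abs_deriv_mul (f' := fun _ => r) measurableSet_Ioi
      (fun x _ => by simpa using ((hasDerivAt_id x).const_mul r).hasDerivWithinAt)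
      (fun x _ y _ hxy => by simpa [hr.ne'] using hxy)]
  rw [key, ← lintegral_const_mul' _ _ (by simp)]
  unfold WW
  congr 1
  ext x
  rw [← ENNReal.ofReal_mul (by positivity), ← ENNReal.ofReal_mul (by positivity)]
  congr 1
  have : mu l t (r * x) = Real.exp (l * x ^ 2 / 2) := by
    unfold mu
    congr 1
    have : 4 * (1 + t) = 2 * r ^ 2 := by linarith
    rw [this]
    field_simp
  rw [this, abs_of_pos hr]
  field_simp

lemma WW0_add (f g : ℝ → ℝ) (hf : Continuous f) (h1 : WW 0 f < ⊤) (h2 : WW 0 g < ⊤) :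
    WW 0 (fun x => f x + g x) < ⊤ := by
  have e : WW 0 (fun x => -g x) = WW 0 g := by unfold WW; simp
  have := WW_sub 0 0 le_rfl f (fun x => - g x) hf (WW 0 f).toReal (WW 0 g).toReal (by positivity)
    (by positivity) (by rw [ENNReal.ofReal_toReal h1.ne])
    (by rw [ENNReal.ofReal_toReal h2.ne, e])
  simp only [sub_neg_eq_add] at this
  exact this.trans_lt ENNReal.ofReal_lt_top

lemma WW0_of_one (f : ℝ → ℝ) (h1 : WW 1 f < ⊤) : WW 0 f < ⊤ := by
  refine lt_of_le_of_lt ?_ h1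
  apply lintegral_mono
  intro x
  apply ENNReal.ofReal_le_ofReal
  gcongr
  norm_num

lemma WW0_x (f : ℝ → ℝ) (h1 : WW 1 f < ⊤) : WW 0 (fun x => x * f x) < ⊤ := by
  refine lt_of_le_of_lt ?_ (ENNReal.mul_lt_top (a := ENNReal.ofReal 2) (by simp) h1)
  unfold WW
  rw [← lintegral_const_mul' _ _ (by simp)]
  apply lintegral_mono
  intro x
  simp only
  rw [← ENNReal.ofReal_mul (by norm_num)]
  apply ENNReal.ofReal_le_ofReal
  have := sq_le_exp 1 one_pos x
  have := mul_le_mul_of_nonneg_right this (sq_nonneg (f x))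
  simp only [zero_mul, zero_div, Real.exp_zero]
  nlinarith

lemma final_core (l l' t C : ℝ) (hC : 0 < C) (c r : ℝ) (hc : 0 < c) (hr : 0 < r)
    (hr2 : r ^ 2 = 2 * (1 + t)) (f g : ℝ → ℝ)
    (h : WW l (fun x => c * f (r * x)) ≤ ENNReal.ofReal C * WW l' (fun x => c * g (r * x))) :
    L2muSq l t f ^ (1 / 2 : ℝ) ≤ ENNReal.ofReal (C ^ (1 / 2 : ℝ)) * L2muSq l' t g ^ (1 / 2 : ℝ) := by
  rw [scale l t c r f hr hr2, scale l' t c r g hr hr2, mul_left_comm,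
    ENNReal.mul_le_mul_iff_right (by simp; positivity) (by simp)] at h
  rw [← ENNReal.ofReal_rpow_of_pos hC, ← ENNReal.mul_rpow_of_nonneg _ _ (by norm_num)]
  exact ENNReal.rpow_le_rpow h (by norm_num)

/-- Weighted regularity transfer: for `0 ≤ λ < λ̃ ≤ 1` there is `C_{λ,λ̃} > 0`,
depending only on `λ` and `λ̃`, such that for any `t ≥ 0` and any `h ∈ H³_μ(ℝ₊)` with
`h(0) = 0`, setting `𝓗 = ∂_z h + (z/(2(1+t))) h`, one has, for `k = 0, 1, 2`,
`‖∂_z^{k+1} h‖_{L²_{μ_λ}} ≤ C_{λ,λ̃} ‖∂_z^k 𝓗‖_{L²_{μ_{λ̃}}}`. -/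
theorem statement11 (lam lam' : ℝ) (hlam0 : 0 ≤ lam) (hlt : lam < lam') (hlam1 : lam' ≤ 1) :
    ∃ C : ℝ, 0 < C ∧
      ∀ t ≥ (0 : ℝ), ∀ h : ℝ → ℝ,
        ContDiff ℝ 3 h → h 0 = 0 →
        (∀ i : ℕ, i ≤ 3 → L2muSq 1 t (deriv^[i] h) < ⊤) →
        ∀ k : ℕ, k ≤ 2 →
          L2muSq lam t (deriv^[k + 1] h) ^ (1 / 2 : ℝ)
            ≤ ENNReal.ofReal C *
                L2muSq lam' t
                    (deriv^[k] fun z => deriv h z + z / (2 * (1 + t)) * h z) ^ (1 / 2 : ℝ) := by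
  obtain ⟨C0, hC0, H0⟩ := T0 lam lam' hlt hlam1
  obtain ⟨C1, hC1, H1⟩ := T1 lam lam' hlam0 hlt hlam1
  obtain ⟨C2, hC2, H2⟩ := T2 lam lam' hlam0 hlt hlam1
  have hCp : 0 < C0 + C1 + C2 + 1 := by positivity
  refine ⟨(C0 + C1 + C2 + 1) ^ (1 / 2 : ℝ), by positivity, ?_⟩
  intro t ht h hh hz hfin k hk
  obtain ⟨r, hr, hr2⟩ : ∃ r : ℝ, 0 < r ∧ r ^ 2 = 2 * (1 + t) :=
    ⟨Real.sqrt (2 * (1 + t)), by positivity, Real.sq_sqrt (by positivity)⟩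
  have hc1 : ContDiff ℝ 2 (deriv h) := by
    have : ContDiff ℝ (2 + 1) h := by simpa [show (2:WithTop ℕ∞) + 1 = 3 by norm_num] using hh
    exact (contDiff_succ_iff_deriv.1 this).2.2
  have hc2 : ContDiff ℝ 1 (deriv (deriv h)) := by
    have : ContDiff ℝ (1 + 1) (deriv h) := by simpa [show (1:WithTop ℕ∞) + 1 = 2 by norm_num] using hc1
    exact (contDiff_succ_iff_deriv.1 this).2.2
  have hc3 : Continuous (deriv (deriv (deriv h))) := hc2.continuous_deriv le_rfl
  have D0 : ∀ x, HasDerivAt h (deriv h x) x := fun x =>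
    (hh.differentiable (by norm_num) x).hasDerivAt
  have D1 : ∀ x, HasDerivAt (deriv h) (deriv (deriv h) x) x := fun x =>
    (hc1.differentiable (by norm_num) x).hasDerivAt
  have D2 : ∀ x, HasDerivAt (deriv (deriv h)) (deriv (deriv (deriv h)) x) x := fun x =>
    (hc2.differentiable (by norm_num) x).hasDerivAt
  have F0 : L2muSq 1 t h < ⊤ := hfin 0 (by norm_num)
  have F1 : L2muSq 1 t (deriv h) < ⊤ := hfin 1 (by norm_num)
  have F2 : L2muSq 1 t (deriv (deriv h)) < ⊤ := hfin 2 (by norm_num)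
  have resc : ∀ (f f' : ℝ → ℝ) (c : ℝ), (∀ x, HasDerivAt f (f' x) x) → ∀ x,
      HasDerivAt (fun x => c * f (r * x)) ((c * r) * f' (r * x)) x := by
    intro f f' c hf x
    have e : HasDerivAt (fun x : ℝ => r * x) r x := by
      simpa using (hasDerivAt_id x).const_mul r
    refine (((hf (r * x)).comp x e).const_mul c).congr_deriv ?_
    ring
  have fin : ∀ (f : ℝ → ℝ) (c : ℝ), L2muSq 1 t f < ⊤ → WW 1 (fun x => c * f (r * x)) < ⊤ := by
    intro f c hf
    rw [scale 1 t c r f hr hr2]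
    exact ENNReal.mul_lt_top (by simp) hf
  have G0 := fin h 1 F0
  have G1 := fin _ (1 * r) F1
  have G2 := fin _ (1 * r * r) F2
  have n0 := hh.continuous
  have n1 := hc1.continuous
  have n2 := hc2.continuous
  have S : Sys (fun x => 1 * h (r * x)) (fun x => (1 * r) * deriv h (r * x))
      (fun x => (1 * r * r) * deriv (deriv h) (r * x))
      (fun x => (1 * r * r * r) * deriv (deriv (deriv h)) (r * x)) := by
    refine ⟨resc _ _ _ D0, resc _ _ _ D1, resc _ _ _ D2, by fun_prop, by simp [hz], ?_, ?_⟩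
    · exact WW0_add _ _ (by fun_prop) (WW0_of_one _ G1) (WW0_x _ G0)
    · exact WW0_add _ _ (by fun_prop) (WW0_add _ _ (by fun_prop) (WW0_of_one _ G2) (WW0_x _ G1))
        (WW0_of_one _ G0)
  have E0 : ∀ x, HasDerivAt (fun z => deriv h z + z / (2 * (1 + t)) * h z)
      (deriv (deriv h) x + x / (2 * (1 + t)) * deriv h x + 1 / (2 * (1 + t)) * h x) x := by
    intro x
    refine ((D1 x).add (((hasDerivAt_id x).div_const (2 * (1 + t))).mul (D0 x))).congr_deriv ?_
    simp; ring
  have E1 : ∀ x, HasDerivAt (fun x => deriv (deriv h) x + x / (2 * (1 + t)) * deriv h x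
        + 1 / (2 * (1 + t)) * h x)
      (deriv (deriv (deriv h)) x + x / (2 * (1 + t)) * deriv (deriv h) x
        + 2 / (2 * (1 + t)) * deriv h x) x := by
    intro x
    refine (((D2 x).add (((hasDerivAt_id x).div_const (2 * (1 + t))).mul (D1 x))).add
      ((D0 x).const_mul _)).congr_deriv ?_
    simp only [id]; ring
  have E0' := funext fun x => (E0 x).deriv
  have E1' := funext fun x => (E1 x).deriv
  have up : ∀ (c : ℝ) (X Y : ENNReal), c ≤ C0 + C1 + C2 → X ≤ ENNReal.ofReal (c + 1) * Y →
      X ≤ ENNReal.ofReal (C0 + C1 + C2 + 1) * Y := by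
    intro c X Y hc hX
    refine hX.trans ?_
    gcongr
  interval_cases k
  · refine final_core lam lam' t _ hCp (1 * r) r (by positivity) hr hr2 _ _ ?_
    have := up C0 _ _ (by linarith) (conv_bd C0 hC0 _ _ (H0 _ _ _ _ S))
    refine this.trans_eq (congrArg (fun f => ENNReal.ofReal _ * WW lam' f) (funext fun x => ?_))
    change _ = (1 * r) * (fun z => deriv h z + z / (2 * (1 + t)) * h z) (r * x)
    simp only
    rw [← hr2]; field_simp
  · refine final_core lam lam' t _ hCp (1 * r * r) r (by positivity) hr hr2 _ _ ?_
    have := up C1 _ _ (by linarith) (conv_bd C1 hC1 _ _ (H1 _ _ _ _ S))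
    refine this.trans_eq (congrArg (fun f => ENNReal.ofReal _ * WW lam' f) (funext fun x => ?_))
    change _ = (1 * r * r) * deriv (fun z => deriv h z + z / (2 * (1 + t)) * h z) (r * x)
    rw [E0', ← hr2]; field_simp
  · refine final_core lam lam' t _ hCp (1 * r * r * r) r (by positivity) hr hr2 _ _ ?_
    have := up C2 _ _ (by linarith) (conv_bd C2 hC2 _ _ (H2 _ _ _ _ S))
    refine this.trans_eq (congrArg (fun f => ENNReal.ofReal _ * WW lam' f) (funext fun x => ?_))
    change _ = (1 * r * r * r) * deriv (deriv (fun z => deriv h z + z / (2 * (1 + t)) * h z)) (r * x)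
    rw [E0', E1', ← hr2]; field_simp
end
end

section
/- There exists an absolute constant C > 0 such that for every 0 < r < 1 and all multi-indices α, β ∈ ℤ₊³ with β ≤ α (componentwise), one has binom(α,β) · M_{r,α} / (M_{r,β} · M_{r,α−β}) ≤ C/(|β|+1)⁴ + C/(|α|−|β|+1)⁴. -/
/-- `|α| = α₁ + α₂ + α₃` for a multi-index `α ∈ ℤ₊³`. -/
def msize (α : ℕ × ℕ × ℕ) : ℕ := α.1 + α.2.1 + α.2.2

/-- Componentwise order on multi-indices: `β ≤ α`. -/
def mle (β α : ℕ × ℕ × ℕ) : Prop := β.1 ≤ α.1 ∧ β.2.1 ≤ α.2.1 ∧ β.2.2 ≤ α.2.2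

/-- The multi-index binomial coefficient `binom(α,β) = Π binom(αᵢ,βᵢ)`. -/
def mbinom (α β : ℕ × ℕ × ℕ) : ℕ :=
  α.1.choose β.1 * α.2.1.choose β.2.1 * α.2.2.choose β.2.2

/-- `M_{r,α} = r^{|α|}(|α|+1)⁴/|α|!`. -/
noncomputable def Mcoef (r : ℝ) (α : ℕ × ℕ × ℕ) : ℝ :=
  r ^ msize α * ((msize α : ℝ) + 1) ^ 4 / (Nat.factorial (msize α) : ℝ)

theorem choose_mul_le_aux (a b c d : ℕ) :
    a.choose b * c.choose d ≤ (a + c).choose (b + d) := by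
  rw [Nat.add_choose_eq]
  exact Finset.single_le_sum (f := fun ij : ℕ × ℕ => a.choose ij.1 * c.choose ij.2)
    (fun _ _ => Nat.zero_le _) (a := (b, d)) (by simp)

theorem pow_four_aux (x y : ℝ) : (x + y) ^ 4 ≤ 8 * (x ^ 4 + y ^ 4) := by
  have h1 : (x + y) ^ 2 ≤ 2 * (x ^ 2 + y ^ 2) := by nlinarith [sq_nonneg (x - y)]
  have h2 : ((x + y) ^ 2) ^ 2 ≤ (2 * (x ^ 2 + y ^ 2)) ^ 2 :=
    pow_le_pow_left₀ (sq_nonneg _) h1 2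
  nlinarith [sq_nonneg (x ^ 2 - y ^ 2)]

theorem statement12 :
    ∃ C : ℝ, 0 < C ∧
      ∀ r : ℝ, 0 < r → r < 1 →
        ∀ α β : ℕ × ℕ × ℕ, mle β α →
          (mbinom α β : ℝ) * Mcoef r α /
              (Mcoef r β * Mcoef r (α.1 - β.1, α.2.1 - β.2.1, α.2.2 - β.2.2))
            ≤ C / ((msize β : ℝ) + 1) ^ 4
              + C / ((msize α : ℝ) - (msize β : ℝ) + 1) ^ 4 := by
  refine ⟨8, by norm_num, ?_⟩
  rintro r hr - ⟨a1, a2, a3⟩ ⟨b1, b2, b3⟩ ⟨h1, h2, h3⟩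
  simp only at h1 h2 h3
  obtain ⟨c1, rfl⟩ := Nat.exists_eq_add_of_le h1
  obtain ⟨c2, rfl⟩ := Nat.exists_eq_add_of_le h2
  obtain ⟨c3, rfl⟩ := Nat.exists_eq_add_of_le h3
  have hB : mbinom (b1 + c1, b2 + c2, b3 + c3) (b1, b2, b3)
      ≤ ((b1 + b2 + b3) + (c1 + c2 + c3)).choose (b1 + b2 + b3) := by
    have e1 := choose_mul_le_aux (b1 + c1) b1 (b2 + c2) b2
    have e2 := choose_mul_le_aux (b1 + c1 + (b2 + c2)) (b1 + b2) (b3 + c3) b3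
    have e3 : (b1 + b2 + b3) + (c1 + c2 + c3) = b1 + c1 + (b2 + c2) + (b3 + c3) := by ring
    rw [e3]
    exact (Nat.mul_le_mul_right _ e1).trans e2
  generalize mbinom (b1 + c1, b2 + c2, b3 + c3) (b1, b2, b3) = B at hB ⊢
  have s1 : msize (b1 + c1, b2 + c2, b3 + c3) = (b1 + b2 + b3) + (c1 + c2 + c3) := by
    simp only [msize]; ring
  have s2 : msize (b1, b2, b3) = b1 + b2 + b3 := rfl
  have s3 : msize (b1 + c1 - b1, b2 + c2 - b2, b3 + c3 - b3) = c1 + c2 + c3 := by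
    simp only [msize, Nat.add_sub_cancel_left]
  simp only [Mcoef, s1, s2, s3]
  generalize b1 + b2 + b3 = m at *
  generalize c1 + c2 + c3 = n at *
  have hF : (B : ℝ) * (m.factorial * n.factorial) ≤ (m + n).factorial := by
    have := Nat.add_choose_mul_factorial_mul_factorial m n
    have h : B * (m.factorial * n.factorial) ≤ (m + n).factorial := by
      calc _ ≤ (m + n).choose m * (m.factorial * n.factorial) := Nat.mul_le_mul_right _ hB
        _ = _ := by rw [← mul_assoc, Nat.choose_symm_add, this]
    exact_mod_cast h
  have fm : (0 : ℝ) < m.factorial := by positivity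
  have fn : (0 : ℝ) < n.factorial := by positivity
  have fmn : (0 : ℝ) < (m + n).factorial := by positivity
  have hx : (0 : ℝ) < (m : ℝ) + 1 := by positivity
  have hy : (0 : ℝ) < (n : ℝ) + 1 := by positivity
  have key : (((m + n : ℕ) : ℝ) + 1) ^ 4 ≤ 8 * (((m : ℝ) + 1) ^ 4 + ((n : ℝ) + 1) ^ 4) := by
    refine le_trans ?_ (pow_four_aux _ _)
    apply pow_le_pow_left₀ (by positivity)
    push_cast; linarith
  have e : ((m + n : ℕ) : ℝ) - (m : ℝ) + 1 = (n : ℝ) + 1 := by push_cast; ring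
  rw [e]
  calc _ = ((B : ℝ) * (m.factorial * n.factorial) / (m + n).factorial) *
        ((((m + n : ℕ) : ℝ) + 1) ^ 4 / (((m : ℝ) + 1) ^ 4 * ((n : ℝ) + 1) ^ 4)) := by
        rw [pow_add]; field_simp
    _ ≤ 1 * ((((m + n : ℕ) : ℝ) + 1) ^ 4 / (((m : ℝ) + 1) ^ 4 * ((n : ℝ) + 1) ^ 4)) := by
        apply mul_le_mul_of_nonneg_right _ (by positivity)
        rw [div_le_one fmn]; exact hF
    _ ≤ 1 * (8 * (((m : ℝ) + 1) ^ 4 + ((n : ℝ) + 1) ^ 4) /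
          (((m : ℝ) + 1) ^ 4 * ((n : ℝ) + 1) ^ 4)) := by gcongr
    _ = _ := by field_simp; ring
end

section
/- There exists an absolute constant C > 0 such that for every 0 < r < 1 and all multi-indices α, β ∈ ℤ₊³ with β ≤ α, α₃ ≥ 1 and β₃ = 0 (so that α − β + (0,1,−1) ∈ ℤ₊³ and |α| ≥ 1), one has binom(α,β) · |α|^{−1} M_{r,α} / (M_{r,β} · M_{r,α−β+(0,1,−1)}) ≤ C/(|β|+1)⁴ + C/(|α|−|β|+1)⁴. -/
theorem real_aux (r B k m n kf mf nf : ℝ) (i j : ℕ) (hr : 0 < r) (hB : 0 ≤ B) (hk : 0 ≤ k)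
    (hm : 1 ≤ m) (hn : n = k + m) (hkf : 0 < kf) (hmf : 0 < mf) (hnf : 0 < nf)
    (h : B * (kf * mf) ≤ nf) :
    B * n⁻¹ * (r ^ (i + j) * (n + 1) ^ 4 / nf) /
      ((r ^ i * (k + 1) ^ 4 / kf) * (r ^ j * (m + 1) ^ 4 / mf))
      ≤ 8 / (k + 1) ^ 4 + 8 / (n - k + 1) ^ 4 := by
  have hn1 : 1 ≤ n := by linarith
  have hn0 : 0 < n := by linarith
  have hk1 : 0 < k + 1 := by linarith
  have hm1 : 0 < m + 1 := by linarith
  have e : n - k + 1 = m + 1 := by linarith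
  rw [e]
  have e1 : B * n⁻¹ * (r ^ (i + j) * (n + 1) ^ 4 / nf) /
      ((r ^ i * (k + 1) ^ 4 / kf) * (r ^ j * (m + 1) ^ 4 / mf))
      = (B * (kf * mf) / nf) * n⁻¹ * ((n + 1) ^ 4 / ((k + 1) ^ 4 * (m + 1) ^ 4)) := by
    rw [pow_add]
    field_simp
  have e2 : 8 / (k + 1) ^ 4 + 8 / (m + 1) ^ 4
      = 8 * ((k + 1) ^ 4 + (m + 1) ^ 4) / ((k + 1) ^ 4 * (m + 1) ^ 4) := by
    field_simp
    ring
  rw [e1, e2]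
  have h1 : B * (kf * mf) / nf ≤ 1 := by
    rw [div_le_one hnf]; exact h
  have h2 : n⁻¹ ≤ 1 := inv_le_one_of_one_le₀ hn1
  have h3 : B * (kf * mf) / nf * n⁻¹ ≤ 1 := mul_le_one₀ h1 (by positivity) h2
  have h4 : (n + 1) ^ 4 ≤ 8 * ((k + 1) ^ 4 + (m + 1) ^ 4) := by
    have a1 : (n + 1) ^ 4 ≤ ((k + 1) + (m + 1)) ^ 4 := by
      exact pow_le_pow_left₀ (by linarith) (by linarith) 4
    have a2 := add_pow_le hk1.le hm1.le 4
    norm_num at a2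
    linarith
  calc _ ≤ 1 * ((n + 1) ^ 4 / ((k + 1) ^ 4 * (m + 1) ^ 4)) := by gcongr
    _ ≤ _ := by rw [one_mul]; gcongr

theorem statement13 :
    ∃ C : ℝ, 0 < C ∧
      ∀ r : ℝ, 0 < r → r < 1 →
        ∀ α β : ℕ × ℕ × ℕ, mle β α → 1 ≤ α.2.2 → β.2.2 = 0 →
          (mbinom α β : ℝ) * ((msize α : ℝ))⁻¹ * Mcoef r α /
              (Mcoef r β * Mcoef r (α.1 - β.1, α.2.1 - β.2.1 + 1, α.2.2 - β.2.2 - 1))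
            ≤ C / ((msize β : ℝ) + 1) ^ 4
              + C / ((msize α : ℝ) - (msize β : ℝ) + 1) ^ 4 := by
  refine ⟨8, by norm_num, ?_⟩
  rintro r hr - ⟨a1, a2, a3⟩ ⟨b1, b2, b3⟩ ⟨h1, h2, h3⟩ ha hb
  simp only at h1 h2 h3 ha hb
  subst hb
  obtain ⟨c1, rfl⟩ := Nat.exists_eq_add_of_le h1
  obtain ⟨c2, rfl⟩ := Nat.exists_eq_add_of_le h2
  obtain ⟨c3, rfl⟩ := Nat.exists_eq_add_of_le ha
  have hs : msize (b1 + c1, b2 + c2, 1 + c3) = (b1 + b2) + (c1 + c2 + 1 + c3) := by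
    simp only [msize]; omega
  have hs2 : msize (b1, b2, 0) = b1 + b2 := by simp [msize]
  have hs3 : msize (b1 + c1 - b1, b2 + c2 - b2 + 1, 1 + c3 - 0 - 1) = c1 + c2 + 1 + c3 := by
    simp only [msize]; omega
  simp only [Mcoef, hs, hs2, hs3]
  have hb : mbinom (b1 + c1, b2 + c2, 1 + c3) (b1, b2, 0)
      ≤ ((b1 + b2) + (c1 + c2 + 1 + c3)).choose (b1 + b2) := by
    have q1 := choose_mul_le_aux (b1 + c1) b1 (b2 + c2) b2
    have q2 := choose_mul_le_aux (b1 + c1 + (b2 + c2)) (b1 + b2) (1 + c3) 0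
    have q3 : b1 + c1 + (b2 + c2) + (1 + c3) = (b1 + b2) + (c1 + c2 + 1 + c3) := by omega
    rw [q3] at q2
    exact (Nat.mul_le_mul_right _ q1).trans q2
  have hf : mbinom (b1 + c1, b2 + c2, 1 + c3) (b1, b2, 0)
      * ((b1 + b2).factorial * (c1 + c2 + 1 + c3).factorial)
      ≤ ((b1 + b2) + (c1 + c2 + 1 + c3)).factorial := by
    rw [← Nat.add_choose_mul_factorial_mul_factorial (b1 + b2) (c1 + c2 + 1 + c3), mul_assoc]
    rw [← Nat.choose_symm_add]
    exact Nat.mul_le_mul_right _ hb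
  apply real_aux r _ _ _ _ _ _ _ _ _ hr
  · positivity
  · positivity
  · norm_cast; omega
  · push_cast; ring
  · positivity
  · positivity
  · positivity
  · exact_mod_cast hf
end

section
/- There exists an absolute constant C > 0 such that for every 0 < r < 1 and all multi-indices α, β ∈ ℤ₊³ with β ≤ α, α₃ ≥ 1 and β₃ ≥ 1 (so that β − (0,0,1) ∈ ℤ₊³ and |β| ≥ 1), one has binom(α,β) · |α|^{−1} M_{r,α} / (M_{r,β−(0,0,1)} · M_{r,α−β+(0,1,0)}) ≤ C/|β|⁴ + C/(|α|−|β|+2)⁴. -/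
theorem choose_mul_choose_le (a b c d : ℕ) :
    a.choose c * b.choose d ≤ (a + b).choose (c + d) := by
  rw [Nat.add_choose_eq]
  exact Finset.single_le_sum (f := fun ij : ℕ × ℕ => a.choose ij.1 * b.choose ij.2)
    (fun _ _ => Nat.zero_le _) (a := (c, d)) (by simp)

theorem core_bound (r : ℝ) (hr : 0 < r) (j m B : ℕ) (hB : B ≤ (m + (j + 1)).choose (j + 1)) :
    (B : ℝ) * (((m + (j + 1) : ℕ) : ℝ))⁻¹ *
      (r ^ (m + (j + 1)) * (((m + (j + 1) : ℕ) : ℝ) + 1) ^ 4 / ((m + (j + 1)).factorial : ℝ)) /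
      ((r ^ j * ((j : ℝ) + 1) ^ 4 / (j.factorial : ℝ)) *
        (r ^ (m + 1) * (((m + 1 : ℕ) : ℝ) + 1) ^ 4 / ((m + 1).factorial : ℝ)))
      ≤ 8 / ((j : ℝ) + 1) ^ 4 + 8 / ((m : ℝ) + 2) ^ 4 := by
  have hc : (m + (j + 1)).choose (j + 1) * m.factorial * (j + 1).factorial
      = (m + (j + 1)).factorial := by
    have := Nat.add_choose_mul_factorial_mul_factorial m (j + 1)
    exact this
  have hB' : (B : ℝ) * m.factorial * (((j : ℝ) + 1) * j.factorial)
      ≤ ((m + (j + 1)).factorial : ℝ) := by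
    have h : B * m.factorial * ((j + 1) * j.factorial) ≤ (m + (j + 1)).factorial := by
      rw [← hc, ← Nat.factorial_succ]
      gcongr
    exact_mod_cast h
  have hF : (0 : ℝ) < ((m + (j + 1)).factorial : ℝ) := by positivity
  have hj : (0 : ℝ) < (j.factorial : ℝ) := by positivity
  have hm : (0 : ℝ) < (m.factorial : ℝ) := by positivity
  have hj0 : (0 : ℝ) ≤ j := by positivity
  have hm0 : (0 : ℝ) ≤ m := by positivity
  rw [Nat.factorial_succ m]
  push_cast
  generalize ((m + (j + 1)).factorial : ℝ) = F at *
  generalize (j.factorial : ℝ) = J at *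
  generalize (m.factorial : ℝ) = M at *
  have hr' : r ^ (m + (j + 1)) = r ^ j * r ^ (m + 1) := by ring
  rw [hr']
  have e1 : (0 : ℝ) < r ^ j := by positivity
  have e2 : (0 : ℝ) < r ^ (m + 1) := by positivity
  generalize r ^ j = R at *
  generalize r ^ (m + 1) = S at *
  generalize (j : ℝ) = x at *
  generalize (m : ℝ) = y at *
  have hb0 : (0 : ℝ) ≤ B := by positivity
  generalize (B : ℝ) = b at *
  have key : b * (y + (x + 1))⁻¹ * (R * S * (y + (x + 1) + 1) ^ 4 / F) /
      (R * (x + 1) ^ 4 / J * (S * (y + 1 + 1) ^ 4 / ((y + 1) * M)))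
      = (b * M * ((x + 1) * J) / F) * ((y + 1) / ((y + (x + 1)) * (x + 1))) *
        ((y + (x + 1) + 1) ^ 4 / ((x + 1) ^ 4 * (y + 2) ^ 4)) := by
    have : y + 1 + 1 = y + 2 := by ring
    rw [this]
    field_simp
  rw [key]
  have k1 : b * M * ((x + 1) * J) / F ≤ 1 := by
    rw [div_le_one hF]; exact hB'
  have k2 : (y + 1) / ((y + (x + 1)) * (x + 1)) ≤ 1 := by
    rw [div_le_one (by positivity)]
    nlinarith [mul_nonneg hj0 hm0, mul_nonneg hj0 hj0]
  have k3 : (y + (x + 1) + 1) ^ 4 ≤ 8 * ((x + 1) ^ 4 + (y + 2) ^ 4) := by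
    have a1 : (y + (x + 1) + 1) ^ 4 ≤ ((x + 1) + (y + 2)) ^ 4 := by
      exact pow_le_pow_left₀ (by positivity) (by linarith) 4
    have a2 := add_pow_le (show 0 ≤ x + 1 by positivity) (show 0 ≤ y + 2 by positivity) 4
    norm_num at a2
    linarith
  calc _ ≤ 1 * 1 * ((y + (x + 1) + 1) ^ 4 / ((x + 1) ^ 4 * (y + 2) ^ 4)) := by
        gcongr
    _ ≤ 1 * 1 * (8 * ((x + 1) ^ 4 + (y + 2) ^ 4) / ((x + 1) ^ 4 * (y + 2) ^ 4)) := by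
        gcongr
    _ = _ := by field_simp; ring

theorem statement14 :
    ∃ C : ℝ, 0 < C ∧
      ∀ r : ℝ, 0 < r → r < 1 →
        ∀ α β : ℕ × ℕ × ℕ, mle β α → 1 ≤ α.2.2 → 1 ≤ β.2.2 →
          (mbinom α β : ℝ) * ((msize α : ℝ))⁻¹ * Mcoef r α /
              (Mcoef r (β.1, β.2.1, β.2.2 - 1) *
                Mcoef r (α.1 - β.1, α.2.1 - β.2.1 + 1, α.2.2 - β.2.2))
            ≤ C / (msize β : ℝ) ^ 4
              + C / ((msize α : ℝ) - (msize β : ℝ) + 2) ^ 4 := by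
  refine ⟨8, by norm_num, ?_⟩
  rintro r hr - ⟨a1, a2, a3⟩ ⟨b1, b2, b3⟩ ⟨h1, h2, h3⟩ - hb
  simp only at h1 h2 h3 hb
  obtain ⟨c1, rfl⟩ := Nat.exists_eq_add_of_le h1
  obtain ⟨c2, rfl⟩ := Nat.exists_eq_add_of_le h2
  obtain ⟨c3, rfl⟩ := Nat.exists_eq_add_of_le h3
  obtain ⟨d, rfl⟩ := Nat.exists_eq_add_of_le' hb
  have hB : mbinom (b1 + c1, b2 + c2, d + 1 + c3) (b1, b2, d + 1) ≤
      ((c1 + c2 + c3) + ((b1 + b2 + d) + 1)).choose ((b1 + b2 + d) + 1) := by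
    unfold mbinom
    refine (Nat.mul_le_mul_right _ (choose_mul_choose_le _ _ _ _)).trans
      ((choose_mul_choose_le _ _ _ _).trans (le_of_eq ?_))
    simp only
    congr 1
    ring
  have h := core_bound r hr (b1 + b2 + d) (c1 + c2 + c3) _ hB
  have s1 : msize (b1 + c1, b2 + c2, d + 1 + c3) = (c1 + c2 + c3) + ((b1 + b2 + d) + 1) := by
    simp only [msize]; ring
  have s2 : msize (b1, b2, d + 1 - 1) = b1 + b2 + d := by simp [msize]
  have s3 : msize (b1 + c1 - b1, b2 + c2 - b2 + 1, d + 1 + c3 - (d + 1)) = c1 + c2 + c3 + 1 := by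
    simp only [msize]; omega
  have s4 : msize (b1, b2, d + 1) = (b1 + b2 + d) + 1 := by simp only [msize]; ring
  simp only [Mcoef]
  rw [s1, s2, s3, s4]
  refine h.trans (le_of_eq ?_)
  push_cast
  congr 3
  ring
end
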